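/- For n ≤ m/2, the capacity of the additive-multiplicative matrix channel Y = A(X+W), with A uniform over invertible n×n matrices and W uniform over n×m matrices of rank t (independent of each other and of X), satisfies C ≤ (m-n)(n-t) + log_q(4(1+n)(1+t)). -/

import Mathlib

open scoped BigOperators

/-- Mutual information (logarithm base `b`) between the input and output of a discrete
memoryless channel with finite input alphabet `α`, finite output alphabet `β`, transition
probabilities `K` and input distribution `p`. -/
noncomputable def mutualInfoB {α β : Type*} [Fintype α] [Fintype β]
    (b : ℝ) (p : α → ℝ) (K : α → β → ℝ) : ℝ :=
  ∑ x : α, ∑ y : β, p x * K x y *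
    Real.logb b (K x y / ∑ x' : α, p x' * K x' y)

/-- The capacity (in base-`b` units) of a discrete channel with transition probabilities `K`:
the supremum of the mutual information over all input distributions. -/
noncomputable def capacityB {α β : Type*} [Fintype α] [Fintype β]
    (b : ℝ) (K : α → β → ℝ) : ℝ :=
  sSup {c : ℝ | ∃ p : α → ℝ, (∀ x, 0 ≤ p x) ∧ (∑ x : α, p x) = 1 ∧ c = mutualInfoB b p K}


/-- Transition probabilities of the additive-multiplicative matrix channel `Y = A(X + W)`,
where `A` is uniform over `GL_n(F_q)` and `W` is uniform over the `n × m` matrices of rank `t`,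
independent of each other and of `X`. -/
noncomputable def ammcKernel (F : Type) [Field F] [Fintype F] (n m t : ℕ)
    (X Y : Matrix (Fin n) (Fin m) F) : ℝ :=
  (Nat.card {p : Matrix.GeneralLinearGroup (Fin n) F ×
        {W : Matrix (Fin n) (Fin m) F // W.rank = t} //
      (p.1 : Matrix (Fin n) (Fin n) F) * (X + (p.2 : Matrix (Fin n) (Fin m) F)) = Y} : ℝ) /
    ((Nat.card (Matrix.GeneralLinearGroup (Fin n) F) : ℝ) *
      (Nat.card {W : Matrix (Fin n) (Fin m) F // W.rank = t} : ℝ))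

/-- The product `∏_{i < s} (q ^ n - q ^ i)`, which for a prime power `q` counts the linearly
independent `s`-tuples in an `n`-dimensional space over the field with `q` elements. -/
noncomputable def indepProd (q : ℝ) (n s : ℕ) : ℝ := ∏ i ∈ Finset.range s, (q ^ n - q ^ i)

lemma indepProd_pos {q : ℝ} (hq : 2 ≤ q) {n s : ℕ} (h : s ≤ n) : 0 < indepProd q n s := by
  refine Finset.prod_pos fun i hi => sub_pos.2 ?_
  exact pow_lt_pow_right₀ (by linarith) (by have := Finset.mem_range.1 hi; omega)

lemma indepProd_eq_zero {q : ℝ} {n s : ℕ} (h : n < s) : indepProd q n s = 0 :=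
  Finset.prod_eq_zero (Finset.mem_range.2 h) (sub_self _)

lemma indepProd_add (q : ℝ) (n s w : ℕ) :
    indepProd q n (s + w) = indepProd q n s * ∏ i ∈ Finset.range w, (q ^ n - q ^ (s + i)) :=
  Finset.prod_range_add _ _ _

lemma indepProd_add_add (q : ℝ) (n s w : ℕ) :
    indepProd q (s + n) (s + w) = indepProd q (s + n) s * (q ^ (s * w) * indepProd q n w) := by
  rw [indepProd_add, indepProd, pow_mul]
  congr 1
  simp only [indepProd, pow_add, ← mul_sub, Finset.prod_mul_distrib, Finset.prod_const,
    Finset.card_range]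

lemma indepProd_succ_succ (q : ℝ) (n s : ℕ) :
    indepProd q (n + 1) (s + 1) = (q ^ (n + 1) - 1) * (q ^ s * indepProd q n s) := by
  have := indepProd_add_add q n 1 s
  rw [add_comm 1 n, add_comm 1 s] at this
  simpa [indepProd] using this

lemma pow_mul_prod_le_indepProd {q : ℝ} (hq : 2 ≤ q) {n a : ℕ} (h : a ≤ n) :
    q ^ (n * a) * ∏ j ∈ Finset.range a, (1 - (1 / 2 : ℝ) ^ (j + 1)) ≤ indepProd q n a := by
  have hr : indepProd q n a = ∏ j ∈ Finset.range a, (q ^ n - q ^ (a - 1 - j)) :=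
    (Finset.prod_range_reflect _ _).symm
  have hc : (q ^ n) ^ a = ∏ _j ∈ Finset.range a, q ^ n := by simp
  rw [hr, pow_mul, hc, ← Finset.prod_mul_distrib]
  refine Finset.prod_le_prod (fun j _ => mul_nonneg (by positivity) ?_) fun j hj => ?_
  · exact sub_nonneg.2 (pow_le_one₀ (by norm_num) (by norm_num))
  · have hj := Finset.mem_range.1 hj
    have h1 : q ^ (a - 1 - j) * 2 ^ (j + 1) ≤ q ^ n := by
      calc q ^ (a - 1 - j) * 2 ^ (j + 1) ≤ q ^ (a - 1 - j) * q ^ (j + 1) := by gcongr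
        _ = q ^ a := by rw [← pow_add]; congr 1; omega
        _ ≤ q ^ n := pow_le_pow_right₀ (by linarith) h
    have h2 : q ^ (a - 1 - j) ≤ q ^ n * (1 / 2 : ℝ) ^ (j + 1) := by
      rw [one_div, inv_pow, ← div_eq_mul_inv, le_div_iff₀ (by positivity)]
      exact h1
    linarith

lemma one_le_succ_mul_prod (a : ℕ) :
    1 ≤ (1 + (a : ℝ)) * ∏ j ∈ Finset.range a, (1 - (1 / 2 : ℝ) ^ (j + 1)) := by
  induction a with
  | zero => simp
  | succ a ih =>
    rw [Finset.prod_range_succ]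
    have hP : 0 ≤ ∏ j ∈ Finset.range a, (1 - (1 / 2 : ℝ) ^ (j + 1)) :=
      Finset.prod_nonneg fun j _ => sub_nonneg.2 (pow_le_one₀ (by norm_num) (by norm_num))
    have h2 : ((a : ℝ) + 2) * (1 / 2 : ℝ) ^ (a + 1) ≤ 1 := by
      rw [one_div, inv_pow, ← div_eq_mul_inv, div_le_one (by positivity)]
      have : a + 1 < 2 ^ (a + 1) := Nat.lt_two_pow_self
      exact_mod_cast this
    push_cast
    nlinarith [mul_nonneg hP (sub_nonneg.2 h2)]

lemma quarter_le_prod (a : ℕ) :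
    1 / 4 ≤ ∏ j ∈ Finset.range a, (1 - (1 / 2 : ℝ) ^ (j + 1)) := by
  have key (k : ℕ) : 1 / 4 + (1 / 2 : ℝ) ^ (k + 2) ≤
      ∏ j ∈ Finset.range (k + 1), (1 - (1 / 2 : ℝ) ^ (j + 1)) := by
    induction k with
    | zero => norm_num
    | succ k ih =>
      rw [Finset.prod_range_succ]
      set h : ℝ := (1 / 2 : ℝ) ^ (k + 2) with hh
      have h0 : 0 ≤ h := by positivity
      have h1 : h ≤ 1 / 4 := by
        calc h ≤ (1 / 2 : ℝ) ^ 2 := pow_le_pow_of_le_one (by norm_num) (by norm_num) (by omega)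
          _ = 1 / 4 := by norm_num
      have h2 : (1 / 2 : ℝ) ^ (k + 1 + 2) = h / 2 := by rw [hh]; ring
      rw [h2]
      nlinarith
  cases a with
  | zero => norm_num
  | succ k => exact le_trans (le_add_of_nonneg_right (by positivity)) (key k)

lemma pow_le_succ_mul_indepProd {q : ℝ} (hq : 2 ≤ q) {n a : ℕ} (h : a ≤ n) :
    q ^ (n * a) ≤ (1 + (a : ℝ)) * indepProd q n a := by
  have h1 := one_le_succ_mul_prod a
  have h2 := pow_mul_prod_le_indepProd hq h
  have h3 : (0 : ℝ) ≤ q ^ (n * a) := by positivity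
  set P := ∏ j ∈ Finset.range a, (1 - (1 / 2 : ℝ) ^ (j + 1))
  calc q ^ (n * a) ≤ q ^ (n * a) * ((1 + (a : ℝ)) * P) := le_mul_of_one_le_right h3 h1
    _ = (1 + (a : ℝ)) * (q ^ (n * a) * P) := by ring
    _ ≤ _ := by gcongr

lemma pow_le_four_mul_indepProd_self {q : ℝ} (hq : 2 ≤ q) (w : ℕ) :
    q ^ (w * w) ≤ 4 * indepProd q w w := by
  have h1 := quarter_le_prod w
  have h2 := pow_mul_prod_le_indepProd hq (le_refl w)
  have h3 : (0 : ℝ) ≤ q ^ (w * w) := by positivity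
  nlinarith

lemma indepProd_le_pow {q : ℝ} (hq : 2 ≤ q) {n s : ℕ} (h : s ≤ n) :
    indepProd q n s ≤ q ^ (n * s) := by
  rw [pow_mul, ← Finset.card_range s, ← Finset.prod_const, Finset.card_range]
  refine Finset.prod_le_prod (fun i hi => sub_nonneg.2 ?_) fun i _ => ?_
  · exact pow_le_pow_right₀ (by linarith) (by have := Finset.mem_range.1 hi; omega)
  · have : 0 ≤ q ^ i := by positivity
    linarith

/-- Upper bound for the Gaussian coefficient `[w + v, w]_q`. -/
lemma indepProd_le_four_mul {q : ℝ} (hq : 2 ≤ q) (w v : ℕ) :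
    indepProd q (w + v) w ≤ 4 * q ^ (w * v) * indepProd q w w := by
  have hp : 0 < q ^ (w * v) := by positivity
  calc indepProd q (w + v) w ≤ q ^ ((w + v) * w) := indepProd_le_pow hq (by omega)
    _ = q ^ (w * v) * q ^ (w * w) := by rw [← pow_add]; congr 1; ring
    _ ≤ q ^ (w * v) * (4 * indepProd q w w) := by
        gcongr; exact pow_le_four_mul_indepProd_self hq w
    _ = _ := by ring

/-- The ratio of the Gaussian coefficients `[m, s + a]_q` and `[m, s]_q`, for `m = d + 2s + a`, is
at least `q ^ (d * a)`. -/
lemma indepProd_ratio_le {q : ℝ} (hq : 2 ≤ q) (d s a : ℕ) :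
    q ^ (d * a) * indepProd q (d + 2 * s + a) s * indepProd q (s + a) (s + a) ≤
      indepProd q (d + 2 * s + a) (s + a) * indepProd q s s := by
  have hq1 : 1 ≤ q := by linarith
  have hprod : q ^ ((d + s) * a) * indepProd q (a + s) a ≤
      ∏ i ∈ Finset.range a, (q ^ (d + 2 * s + a) - q ^ (s + i)) := by
    have hc : (q ^ (d + s)) ^ a = ∏ _i ∈ Finset.range a, q ^ (d + s) := by simp
    rw [pow_mul, indepProd, hc, ← Finset.prod_mul_distrib]
    refine Finset.prod_le_prod (fun i hi => mul_nonneg (by positivity) (sub_nonneg.2 ?_))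
      fun i _ => ?_
    · exact pow_le_pow_right₀ hq1 (by have := Finset.mem_range.1 hi; omega)
    · rw [mul_sub, ← pow_add, ← pow_add]
      have : q ^ (s + i) ≤ q ^ (d + s + i) := pow_le_pow_right₀ hq1 (by omega)
      rw [show d + s + (a + s) = d + 2 * s + a by ring]
      linarith
  have h1 : indepProd q (s + a) (s + a) =
      indepProd q (a + s) a * (q ^ (a * s) * indepProd q s s) := by
    rw [add_comm s a, indepProd_add_add]
  have h2 : 0 < indepProd q (d + 2 * s + a) s := indepProd_pos hq (by omega)
  have h3 : 0 < indepProd q s s := indepProd_pos hq le_rfl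
  rw [h1, indepProd_add q _ s a]
  calc _ = indepProd q (d + 2 * s + a) s * (q ^ ((d + s) * a) * indepProd q (a + s) a) *
        indepProd q s s := by rw [add_mul, pow_add, mul_comm a s]; ring
    _ ≤ _ := by gcongr

lemma exponent_le {n m t u v w s a d : ℕ} (hnm : 2 * n ≤ m) (ht : t ≤ n) (hu : u ≤ n)
    (hus : u = s + w) (hts : t = s + a) (hv : m = s + (w + v)) (hd : m = d + 2 * s + a) :
    a * w + w * v ≤ (m - n) * (n - t) + n * a + d * a := by
  obtain ⟨k, rfl⟩ := Nat.exists_eq_add_of_le ht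
  obtain ⟨j, rfl⟩ := Nat.exists_eq_add_of_le hnm
  obtain ⟨g, hg⟩ := Nat.exists_eq_add_of_le hu
  rw [Nat.add_sub_cancel_left, show 2 * (t + k) + j - (t + k) = t + k + j by omega]
  zify at *
  have hw : (w : ℤ) = u - s := by linarith
  have hk : (k : ℤ) = u + g - t := by linarith
  have hvv : (v : ℤ) = 2 * (u + g) + j - u := by linarith
  have hdd : (d : ℤ) = 2 * (u + g) + j - 2 * s - a := by linarith
  have h1 : (0 : ℤ) ≤ g * (g + j + t) := by positivity
  have h2 : (0 : ℤ) ≤ a * k := by positivity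
  have : ((t : ℤ) + k + j) * k + (t + k) * a + d * a - (a * w + w * v) =
      g * (g + j + t) + a * k := by
    rw [hw, hvv, hdd, hk, hts]; ring
  linarith

/-- The counting inequality behind the capacity bound: `R` and `T` are the numbers of `n × m`
matrices of rank `u` and `s + a`, and `C` is the number of `u`-tuples of vectors in `F ^ n` that,
together with a given `a`-dimensional subspace, span a subspace of dimension `s + a`. -/
lemma count_mul_count_le {q : ℝ} (hq : 2 ≤ q) {n m u s a : ℕ} {R T C : ℝ} (hnm : 2 * n ≤ m)
    (ht : s + a ≤ n) (hu : u ≤ n)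
    (hR : R * indepProd q u u = indepProd q m u * indepProd q n u)
    (hT : T * indepProd q (s + a) (s + a) = indepProd q m (s + a) * indepProd q n (s + a))
    (hC : C * indepProd q s s * q ^ (a * s) =
      q ^ (a * u) * indepProd q u s * ∏ i ∈ Finset.range s, (q ^ n - q ^ (a + i))) :
    R * C ≤ 4 * (1 + ((s + a : ℕ) : ℝ)) * q ^ ((m - n) * (n - (s + a))) *
      (indepProd q n u * T) := by
  have hq0 : 0 < q := by linarith
  have hq1 : 1 ≤ q := by linarith
  have hT0 : 0 ≤ T := by
    have h1 := indepProd_pos hq (show s + a ≤ m by omega)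
    have h2 := indepProd_pos hq ht
    have h3 := indepProd_pos hq (le_refl (s + a))
    by_contra h
    have := mul_neg_of_neg_of_pos (not_le.1 h) h3
    nlinarith [mul_pos h1 h2]
  have hnu := indepProd_pos hq hu
  have hss := indepProd_pos hq (le_refl s)
  rcases lt_or_ge u s with hsu | hsu
  · rw [indepProd_eq_zero hsu, mul_zero, zero_mul] at hC
    have : C = 0 := by
      have := (pow_pos hq0 (a * s)).ne'
      simpa [this, hss.ne'] using hC
    rw [this, mul_zero]
    positivity
  obtain ⟨w, hw⟩ := Nat.exists_eq_add_of_le hsu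
  obtain ⟨v, hv⟩ := Nat.exists_eq_add_of_le (show u ≤ m by omega)
  obtain ⟨d, hd⟩ := Nat.exists_eq_add_of_le (show 2 * s + a ≤ m by omega)
  set E : ℝ := ∏ i ∈ Finset.range s, (q ^ n - q ^ (a + i))
  have hna := indepProd_pos hq (show a ≤ n by omega)
  have hnt : indepProd q n (s + a) = indepProd q n a * E := by rw [add_comm, indepProd_add]
  have hE0 : 0 < E := by
    have := indepProd_pos hq ht
    rw [hnt] at this
    exact pos_of_mul_pos_right this hna.le
  have hww := indepProd_pos hq (le_refl w)
  have hus := indepProd_pos hq hsu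
  have htt := indepProd_pos hq (le_refl (s + a))
  have hms := indepProd_pos hq (show s ≤ m by omega)
  have hmu : indepProd q m u = indepProd q m s * (q ^ (s * w) * indepProd q (w + v) w) := by
    rw [hv, hw, add_assoc, indepProd_add_add]
  have huu' : indepProd q u u = indepProd q u s * (q ^ (s * w) * indepProd q w w) := by
    conv_lhs => rw [hw, indepProd_add_add]
    rw [← hw]
  have hpsw : 0 < q ^ (s * w) := by positivity
  have hR' : R * (indepProd q u s * indepProd q w w) =
      indepProd q m s * indepProd q (w + v) w * indepProd q n u := by
    apply mul_right_cancel₀ hpsw.ne'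
    rw [hmu, huu'] at hR
    linear_combination hR
  have hC' : C * indepProd q s s = q ^ (a * w) * indepProd q u s * E := by
    apply mul_right_cancel₀ (pow_pos hq0 (a * s)).ne'
    rw [hC, hw, mul_add, pow_add]; ring
  have hRC : R * C * (indepProd q w w * indepProd q s s) =
      indepProd q m s * indepProd q (w + v) w * indepProd q n u * q ^ (a * w) * E := by
    apply mul_right_cancel₀ hus.ne'
    linear_combination (C * indepProd q s s) * hR' +
      indepProd q m s * indepProd q (w + v) w * indepProd q n u * hC'
  have hratio := indepProd_ratio_le hq d s a
  rw [show d + 2 * s + a = m by omega] at hratio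
  have hexp : q ^ (a * w + w * v) ≤ q ^ ((m - n) * (n - (s + a)) + n * a + d * a) :=
    pow_le_pow_right₀ hq1 (exponent_le hnm ht hu hw rfl (by omega) (by omega))
  have hpow := pow_le_succ_mul_indepProd hq (show a ≤ n by omega)
  have hgauss := indepProd_le_four_mul hq w v
  set e := (m - n) * (n - (s + a))
  have hcast : 1 + (a : ℝ) ≤ 1 + ((s + a : ℕ) : ℝ) := by
    push_cast
    linarith [Nat.cast_nonneg (α := ℝ) s]
  have hTT : T * indepProd q (s + a) (s + a) = indepProd q m (s + a) * (indepProd q n a * E) := by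
    rw [hT, hnt]
  have step1 : R * C * indepProd q s s ≤
      indepProd q m s * 4 * indepProd q n u * E * q ^ (a * w + w * v) := by
    refine le_of_mul_le_mul_right ?_ hww
    calc R * C * indepProd q s s * indepProd q w w
        = indepProd q m s * indepProd q n u * q ^ (a * w) * E * indepProd q (w + v) w := by
          linear_combination hRC
      _ ≤ indepProd q m s * indepProd q n u * q ^ (a * w) * E *
          (4 * q ^ (w * v) * indepProd q w w) := by gcongr
      _ = _ := by rw [pow_add]; ring
  refine le_of_mul_le_mul_right ?_ (mul_pos hss htt)
  calc R * C * (indepProd q s s * indepProd q (s + a) (s + a))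
      = R * C * indepProd q s s * indepProd q (s + a) (s + a) := by ring
    _ ≤ indepProd q m s * 4 * indepProd q n u * E * q ^ (a * w + w * v) *
        indepProd q (s + a) (s + a) := mul_le_mul_of_nonneg_right step1 htt.le
    _ ≤ indepProd q m s * 4 * indepProd q n u * E * q ^ (e + n * a + d * a) *
        indepProd q (s + a) (s + a) := by gcongr
    _ = 4 * q ^ e * indepProd q n u * E * q ^ (n * a) *
        (q ^ (d * a) * indepProd q m s * indepProd q (s + a) (s + a)) := by
      rw [pow_add, pow_add]; ring
    _ ≤ 4 * q ^ e * indepProd q n u * E * ((1 + ((s + a : ℕ) : ℝ)) * indepProd q n a) *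
        (indepProd q m (s + a) * indepProd q s s) := by
      gcongr
      exact hpow.trans (by gcongr)
    _ = 4 * (1 + ((s + a : ℕ) : ℝ)) * q ^ e * indepProd q n u *
        (indepProd q m (s + a) * (indepProd q n a * E)) * indepProd q s s := by ring
    _ = _ := by rw [← hTT]; ring

/-- If `K x y ≤ M y` for all inputs `x`, then every input distribution has mutual information at
most `log (∑ y, M y)`. -/
lemma mutualInfoB_le_logb {α β : Type*} [Fintype α] [Fintype β] {b B : ℝ} (hb : 1 < b)
    {p : α → ℝ} (hp : ∀ x, 0 ≤ p x) (hp1 : ∑ x, p x = 1) {K : α → β → ℝ}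
    (hK : ∀ x y, 0 ≤ K x y) (hK1 : ∀ x, ∑ y, K x y = 1) {M : β → ℝ} (hM : ∀ y, 0 ≤ M y)
    (hKM : ∀ x y, K x y ≤ M y) (hB0 : 0 < B) (hB : ∑ y, M y ≤ B) :
    mutualInfoB b p K ≤ Real.logb b B := by
  have hlog : 0 < Real.log b := Real.log_pos hb
  set P : β → ℝ := fun y => ∑ x, p x * K x y
  have hP0 (y) : 0 ≤ P y := Finset.sum_nonneg fun x _ => mul_nonneg (hp x) (hK x y)
  have hterm (x y) : p x * K x y * Real.logb b (K x y / P y) ≤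
      p x * K x y * Real.logb b B +
        (p x * K x y * (M y / (P y * B)) - p x * K x y) / Real.log b := by
    rcases (mul_nonneg (hp x) (hK x y)).eq_or_lt with h0 | h0
    · rw [← h0]; simp
    have hKpos : 0 < K x y := by
      rcases (hK x y).eq_or_lt with h | h
      · rw [← h, mul_zero] at h0; exact absurd h0 (lt_irrefl _)
      · exact h
    have hPpos : 0 < P y := h0.trans_le
      (Finset.single_le_sum (f := fun x => p x * K x y)
        (fun x _ => mul_nonneg (hp x) (hK x y)) (Finset.mem_univ x))
    have hMpos : 0 < M y := hKpos.trans_le (hKM x y)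
    have h1 : Real.log (K x y / P y) ≤ Real.log B + (M y / (P y * B) - 1) := by
      calc Real.log (K x y / P y) ≤ Real.log (M y / P y) :=
            Real.log_le_log (by positivity) (by gcongr; exact hKM x y)
        _ = Real.log B + Real.log (M y / (P y * B)) := by
            rw [← Real.log_mul hB0.ne' (by positivity)]
            congr 1; field_simp
        _ ≤ _ := by gcongr; exact Real.log_le_sub_one_of_pos (by positivity)
    rw [Real.logb, Real.logb]
    calc p x * K x y * (Real.log (K x y / P y) / Real.log b)
        ≤ p x * K x y * ((Real.log B + (M y / (P y * B) - 1)) / Real.log b) := by gcongr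
      _ = _ := by ring
  have hsum : ∑ x, ∑ y, p x * K x y = 1 := by
    simp_rw [← Finset.mul_sum, hK1, mul_one, hp1]
  have hsum2 : ∑ x, ∑ y, p x * K x y * (M y / (P y * B)) ≤ 1 := by
    rw [Finset.sum_comm]
    simp_rw [← Finset.sum_mul]
    calc ∑ y, P y * (M y / (P y * B)) ≤ ∑ y, M y / B := by
          refine Finset.sum_le_sum fun y _ => ?_
          rcases (hP0 y).eq_or_lt with h | h
          · rw [← h, zero_mul]; exact div_nonneg (hM y) hB0.le
          · exact le_of_eq (by field_simp)
      _ = (∑ y, M y) / B := by rw [Finset.sum_div]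
      _ ≤ 1 := (div_le_one hB0).2 hB
  calc mutualInfoB b p K ≤ ∑ x, ∑ y, (p x * K x y * Real.logb b B +
        (p x * K x y * (M y / (P y * B)) - p x * K x y) / Real.log b) :=
        Finset.sum_le_sum fun x _ => Finset.sum_le_sum fun y _ => hterm x y
    _ = (∑ x, ∑ y, p x * K x y) * Real.logb b B +
        ((∑ x, ∑ y, p x * K x y * (M y / (P y * B))) - ∑ x, ∑ y, p x * K x y) / Real.log b := by
      simp only [Finset.sum_add_distrib, Finset.sum_mul, Finset.sum_div, sub_div,
        Finset.sum_sub_distrib]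
    _ ≤ Real.logb b B := by
      rw [hsum, one_mul]
      have : (∑ x, ∑ y, p x * K x y * (M y / (P y * B)) - 1) / Real.log b ≤ 0 :=
        div_nonpos_of_nonpos_of_nonneg (by linarith) hlog.le
      linarith

section Counting

open Module Submodule

variable {F V : Type*} [Field F] [AddCommGroup V] [Module F V] [Finite V]

/-- The number of `k`-tuples of vectors that together with `W` span a space of dimension `t`. -/
noncomputable def spanCount (W : Submodule F V) (k t : ℕ) : ℕ :=
  Nat.card {f : Fin k → V // finrank F ↥(W ⊔ span F (Set.range f)) = t}

lemma spanCount_succ [Fintype V] (W : Submodule F V) (k t : ℕ) :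
    spanCount W (k + 1) t = ∑ v : V, spanCount (W ⊔ span F {v}) k t := by
  simp only [spanCount]
  rw [← Nat.card_sigma]
  refine Nat.card_congr ?_
  refine ((Fin.consEquiv fun _ => V).symm.subtypeEquiv (q := fun p : V × (Fin k → V) =>
    finrank F ↥((W ⊔ span F {p.1}) ⊔ span F (Set.range p.2)) = t) fun f => ?_).trans
    (Equiv.subtypeProdEquivSigmaSubtype fun v (f : Fin k → V) =>
      finrank F ↥((W ⊔ span F {v}) ⊔ span F (Set.range f)) = t)
  obtain ⟨p, rfl⟩ := (Fin.consEquiv fun _ => V).surjective f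
  rw [Equiv.symm_apply_apply]
  change finrank F ↥(W ⊔ span F (Set.range (Fin.cons p.1 p.2 : Fin (k + 1) → V))) = t ↔ _
  rw [Fin.range_cons, span_insert, sup_assoc]

lemma spanCount_eq_zero {W : Submodule F V} {k t : ℕ} (h : t < finrank F W) :
    spanCount W k t = 0 := by
  have : IsEmpty {f : Fin k → V // finrank F ↥(W ⊔ span F (Set.range f)) = t} :=
    ⟨fun f => absurd (Submodule.finrank_mono (le_sup_left : W ≤ W ⊔ span F (Set.range f.1)))
      (by rw [f.2]; omega)⟩
  exact Nat.card_of_isEmpty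

lemma spanCount_mul [Fintype F] (k s : ℕ) (W : Submodule F V) {a n : ℕ} (hW : finrank F W = a)
    (hn : finrank F V = n) :
    (spanCount W k (a + s) : ℝ) * indepProd (Fintype.card F) s s * (Fintype.card F : ℝ) ^ (a * s) =
      (Fintype.card F : ℝ) ^ (a * k) * indepProd (Fintype.card F) k s *
        ∏ i ∈ Finset.range s, ((Fintype.card F : ℝ) ^ n - (Fintype.card F : ℝ) ^ (a + i)) := by
  classical
  set q : ℝ := (Fintype.card F : ℝ) with hq
  induction k generalizing s W a with
  | zero =>
    have hcount : spanCount W 0 (a + s) = if s = 0 then 1 else 0 := by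
      have hr (f : Fin 0 → V) : finrank F ↥(W ⊔ span F (Set.range f)) = a := by
        rw [Set.range_eq_empty, span_empty, sup_bot_eq, hW]
      simp only [spanCount, hr]
      split_ifs with h
      · subst h; simp
      · have : IsEmpty {f : Fin 0 → V // a = a + s} := ⟨fun f => h (by have := f.2; omega)⟩
        exact Nat.card_of_isEmpty
    rw [hcount]
    rcases Nat.eq_zero_or_pos s with rfl | h
    · simp [indepProd]
    · rw [if_neg h.ne', indepProd_eq_zero h]; simp
  | succ k ih =>
    have := Fintype.ofFinite V
    have hin : ((Finset.univ.filter fun v : V => v ∈ W).card : ℝ) = q ^ a := by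
      rw [← Fintype.card_subtype, ← Nat.card_eq_fintype_card]
      have h : Nat.card W = Nat.card F ^ finrank F W := Module.natCard_eq_pow_finrank
      rw [Nat.card_eq_fintype_card (α := F), hW] at h
      rw [hq]; exact_mod_cast h
    have hout : ((Finset.univ.filter fun v : V => v ∉ W).card : ℝ) = q ^ n - q ^ a := by
      have h1 := Finset.card_filter_add_card_filter_not (s := (Finset.univ : Finset V)) (· ∈ W)
      have h2 : Nat.card V = Nat.card F ^ finrank F V := Module.natCard_eq_pow_finrank
      rw [Finset.card_univ, ← Nat.card_eq_fintype_card, h2, hn,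
        Nat.card_eq_fintype_card (α := F)] at h1
      rw [← hin, eq_sub_iff_add_eq, add_comm, hq]
      exact_mod_cast h1
    have hsum (t : ℕ) : (spanCount W (k + 1) t : ℝ) = q ^ a * spanCount W k t +
        ∑ v ∈ Finset.univ.filter fun v : V => v ∉ W,
          (spanCount (W ⊔ span F {v}) k t : ℝ) := by
      rw [spanCount_succ, Nat.cast_sum, ← Finset.sum_filter_add_sum_filter_not _ (· ∈ W)]
      congr 1
      rw [← hin, ← nsmul_eq_mul]
      refine Finset.sum_eq_card_nsmul fun v hv => ?_
      rw [sup_eq_left.2 ((span_singleton_le_iff_mem _ _).2 (Finset.mem_filter.1 hv).2)]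
    have hrank {v : V} (hv : v ∉ W) : finrank F ↥(W ⊔ span F {v}) = a + 1 := by
      rw [finrank_sup_span_singleton hv, hW]
    rw [hsum]
    cases s with
    | zero =>
      rw [Finset.sum_eq_zero fun v hv => ?_]
      · have := ih 0 W hW
        simp only [indepProd, Finset.range_zero, Finset.prod_empty, mul_one, mul_zero, pow_zero,
          add_zero] at this ⊢
        rw [this, mul_add, pow_add, mul_one, mul_comm]
      · rw [spanCount_eq_zero, Nat.cast_zero]
        rw [hrank (Finset.mem_filter.1 hv).2]; omega
    | succ s =>
      have h1 := ih (s + 1) W hW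
      set E : ℝ := ∏ i ∈ Finset.range s, (q ^ n - q ^ (a + 1 + i)) with hE
      have hE' : ∏ i ∈ Finset.range (s + 1), (q ^ n - q ^ (a + i)) = (q ^ n - q ^ a) * E := by
        rw [Finset.prod_range_succ', mul_comm, hE]
        simp only [add_zero, add_assoc, add_comm 1]
      have h2 : (∑ v ∈ Finset.univ.filter fun v : V => v ∉ W,
          (spanCount (W ⊔ span F {v}) k (a + (s + 1)) : ℝ)) *
            (indepProd q s s * q ^ ((a + 1) * s)) =
          (q ^ n - q ^ a) * (q ^ ((a + 1) * k) * indepProd q k s * E) := by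
        rw [← hout, ← nsmul_eq_mul, Finset.sum_mul]
        refine Finset.sum_eq_card_nsmul fun v hv => ?_
        have := ih s (W ⊔ span F {v}) (hrank (Finset.mem_filter.1 hv).2)
        rw [show a + (s + 1) = a + 1 + s by ring, ← mul_assoc, this]
      rw [hE'] at h1 ⊢
      rw [indepProd_succ_succ q k s]
      have h3 : indepProd q k (s + 1) = indepProd q k s * (q ^ k - q ^ s) :=
        Finset.prod_range_succ _ _
      rw [h3] at h1
      have h4 := indepProd_succ_succ q s s
      set S := ∑ v ∈ Finset.univ.filter fun v : V => v ∉ W,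
          (spanCount (W ⊔ span F {v}) k (a + (s + 1)) : ℝ)
      calc (q ^ a * spanCount W k (a + (s + 1)) + S) * indepProd q (s + 1) (s + 1) *
            q ^ (a * (s + 1))
          = q ^ a * (spanCount W k (a + (s + 1)) * indepProd q (s + 1) (s + 1) *
              q ^ (a * (s + 1))) +
            S * (indepProd q s s * q ^ ((a + 1) * s)) * ((q ^ (s + 1) - 1) * q ^ a) := by
            rw [h4]; ring
        _ = _ := by rw [h1, h2]; ring

lemma spanCount_bot_mul [Fintype F] (k t : ℕ) {n : ℕ} (hn : finrank F V = n) :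
    (spanCount (⊥ : Submodule F V) k t : ℝ) * indepProd (Fintype.card F) t t =
      indepProd (Fintype.card F) k t * indepProd (Fintype.card F) n t := by
  have := spanCount_mul k t (⊥ : Submodule F V) (finrank_bot F V) hn
  simpa [indepProd] using this

/-- Linearly independent tuples of the same length are related by a linear automorphism. -/
lemma exists_linearEquiv_apply_eq {k : ℕ} {y z : Fin k → V} (hy : LinearIndependent F y)
    (hz : LinearIndependent F z) : ∃ e : V ≃ₗ[F] V, ∀ i, e (y i) = z i := by
  let f := hy.linearCombinationEquiv.symm ≪≫ₗ hz.linearCombinationEquiv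
  obtain ⟨g, hg⟩ := Submodule.exists_linearEquiv_restrict_eq f
  refine ⟨g, fun i => ?_⟩
  have h1 : (hy.linearCombinationEquiv (Finsupp.single i 1) : V) = y i := by simp
  have h2 : (hz.linearCombinationEquiv (Finsupp.single i 1) : V) = z i := by simp
  rw [← h1, ← hg, ← h2]
  simp [f]

end Counting

section Matrices

open Module Submodule Matrix

variable {F : Type} [Field F] {n m : ℕ}

lemma card_rank_eq [Finite F] (t : ℕ) : Nat.card {W : Matrix (Fin n) (Fin m) F // W.rank = t} =
    spanCount (⊥ : Submodule F (Fin n → F)) m t := by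
  refine Nat.card_congr (Equiv.subtypeEquiv
    ⟨fun W => W.col, fun f => Matrix.of fun i j => f j i, fun _ => rfl, fun _ => rfl⟩ fun W => ?_)
  rw [Matrix.rank_eq_finrank_span_cols, bot_sup_eq]
  rfl

lemma exists_GL_mulVec_eq [Finite F] {k : ℕ} {y z : Fin k → Fin n → F} (hy : LinearIndependent F y)
    (hz : LinearIndependent F z) : ∃ A : GL (Fin n) F, ∀ i, A.1 *ᵥ y i = z i := by
  obtain ⟨e, he⟩ := exists_linearEquiv_apply_eq hy hz
  refine ⟨Matrix.GeneralLinearGroup.toLin.symm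
    ((LinearMap.GeneralLinearGroup.generalLinearEquiv F _).symm e), fun i => ?_⟩
  rw [← Matrix.mulVecLin_apply, ← Matrix.GeneralLinearGroup.toLin_apply, MulEquiv.apply_symm_apply,
    ← he i]
  rfl

lemma card_fixing_mul_le [Fintype F] {k : ℕ} {y : Fin k → Fin n → F} (hy : LinearIndependent F y)
    (hk : k ≤ n) :
    (Nat.card {A : GL (Fin n) F // ∀ i, A.1 *ᵥ y i = y i} : ℝ) * indepProd (Fintype.card F) n k ≤
      Nat.card (GL (Fin n) F) := by
  have h1 : (Nat.card {z : Fin k → Fin n → F // LinearIndependent F z} : ℝ) =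
      indepProd (Fintype.card F) n k := by
    rw [card_linearIndependent (by simpa using hk), indepProd, Nat.cast_prod,
      ← Fin.prod_univ_eq_prod_range fun i => (Fintype.card F : ℝ) ^ n - (Fintype.card F : ℝ) ^ i]
    refine Finset.prod_congr rfl fun i _ => ?_
    rw [Module.finrank_fintype_fun_eq_card, Fintype.card_fin, Nat.cast_sub, Nat.cast_pow,
      Nat.cast_pow]
    exact Nat.pow_le_pow_right Fintype.card_pos (by omega)
  rw [← h1]
  choose h hh using fun z : {z : Fin k → Fin n → F // LinearIndependent F z} =>
    exists_GL_mulVec_eq hy z.2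
  rw [← Nat.cast_mul, ← Nat.card_prod]
  refine Nat.cast_le.2 (Nat.card_le_card_of_injective (fun p => h p.2 * p.1.1) ?_)
  rintro ⟨⟨A, hA⟩, z⟩ ⟨⟨B, hB⟩, w⟩ hAB
  have hzw : z = w := by
    ext1
    funext i
    have := congrArg (fun C : GL (Fin n) F => C.1 *ᵥ y i) hAB
    simpa [← Matrix.mulVec_mulVec, hA, hB, hh] using this
  subst hzw
  simpa using hAB

/-- The number of invertible `A` with `A * Y - X` of rank `t`, in terms of `spanCount`. -/
lemma exists_card_rank_sub_mul_le [Fintype F] (X Y : Matrix (Fin n) (Fin m) F) (t : ℕ) :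
    ∃ W : Submodule F (Fin n → F),
      (Nat.card {A : GL (Fin n) F // (A.1 * Y - X).rank = t} : ℝ) *
          indepProd (Fintype.card F) n Y.rank ≤
        spanCount W Y.rank t * Nat.card (GL (Fin n) F) := by
  obtain ⟨b⟩ : Nonempty (Basis (Fin Y.rank) F (LinearMap.range Y.mulVecLin)) := ⟨finBasis F _⟩
  choose c hc using fun i => (b i).2
  set y : Fin Y.rank → Fin n → F := fun i => b i
  have hYc (i) : Y *ᵥ c i = y i := hc i
  have hli : LinearIndependent F y := b.linearIndependent.map' (Submodule.subtype _) (ker_subtype _)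
  have hcov : LinearMap.ker Y.mulVecLin ⊔ span F (Set.range c) = ⊤ := by
    have hspan : (span F (Set.range c)).map Y.mulVecLin = LinearMap.range Y.mulVecLin := by
      rw [Submodule.map_span, ← Set.range_comp]
      have h1 : (Y.mulVecLin : (Fin m → F) → Fin n → F) ∘ c =
          (LinearMap.range Y.mulVecLin).subtype ∘ b := funext hYc
      rw [h1, Set.range_comp, ← Submodule.map_span, b.span_eq, Submodule.map_subtype_top]
    rw [eq_top_iff, sup_comm, ← LinearMap.map_le_map_iff, hspan, LinearMap.range_eq_map]
  set W := (LinearMap.ker Y.mulVecLin).map X.mulVecLin with hW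
  let φ : GL (Fin n) F → Fin Y.rank → Fin n → F := fun A i => A.1 *ᵥ y i - X *ᵥ c i
  have hφ (A : GL (Fin n) F) : finrank F ↥(W ⊔ span F (Set.range (φ A))) = (A.1 * Y - X).rank := by
    have h1 : (LinearMap.ker Y.mulVecLin).map (A.1 * Y - X).mulVecLin = W := by
      rw [hW]
      ext v
      simp only [Submodule.mem_map, LinearMap.mem_ker, mulVecLin_apply, Matrix.sub_mulVec,
        ← Matrix.mulVec_mulVec]
      constructor
      · rintro ⟨x, hx, rfl⟩
        exact ⟨-x, by rw [Matrix.mulVec_neg, hx, neg_zero], by simp [Matrix.mulVec_neg, hx]⟩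
      · rintro ⟨x, hx, rfl⟩
        exact ⟨-x, by rw [Matrix.mulVec_neg, hx, neg_zero], by simp [Matrix.mulVec_neg, hx]⟩
    have h2 : ((A.1 * Y - X).mulVecLin : (Fin m → F) → Fin n → F) ∘ c = φ A := by
      funext i
      simp only [φ, Function.comp, mulVecLin_apply, Matrix.sub_mulVec, ← Matrix.mulVec_mulVec, hYc]
    change _ = finrank F (LinearMap.range (A.1 * Y - X).mulVecLin)
    rw [LinearMap.range_eq_map, ← hcov, Submodule.map_sup, Submodule.map_span, ← Set.range_comp,
      h1, h2]
  refine ⟨W, ?_⟩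
  have hinv (A) : φ (Function.invFun φ (φ A)) = φ A := Function.invFun_eq ⟨A, rfl⟩
  have hcard : Nat.card {A : GL (Fin n) F // (A.1 * Y - X).rank = t} ≤
      spanCount W Y.rank t * Nat.card {A : GL (Fin n) F // ∀ i, A.1 *ᵥ y i = y i} := by
    rw [spanCount, ← Nat.card_prod]
    refine Nat.card_le_card_of_injective (fun A => ⟨⟨φ A.1, (hφ A.1).trans A.2⟩,
      ⟨(Function.invFun φ (φ A.1))⁻¹ * A.1, fun i => ?_⟩⟩) ?_
    · have h := congrFun (hinv A.1) i
      have h' : (Function.invFun φ (φ A.1)).1 *ᵥ y i = A.1.1 *ᵥ y i := sub_left_injective h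
      rw [Units.val_mul, ← Matrix.mulVec_mulVec, ← h', Matrix.mulVec_mulVec, Units.inv_mul,
        Matrix.one_mulVec]
    · rintro ⟨A, hA⟩ ⟨B, hB⟩ hAB
      simp only [Prod.mk.injEq, Subtype.mk.injEq] at hAB ⊢
      obtain ⟨h1, h2⟩ := hAB
      rw [h1] at h2
      exact mul_left_cancel h2
  calc _ ≤ ((spanCount W Y.rank t * Nat.card {A : GL (Fin n) F // ∀ i, A.1 *ᵥ y i = y i} : ℕ) : ℝ)
        * indepProd (Fintype.card F) n Y.rank := by
        gcongr
        exact (indepProd_pos (by exact_mod_cast Fintype.one_lt_card) Y.rank_le_height).le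
    _ ≤ _ := by
        rw [Nat.cast_mul, mul_assoc]
        gcongr
        exact card_fixing_mul_le hli Y.rank_le_height

lemma card_ammc_pairs_le [Finite F] (X Y : Matrix (Fin n) (Fin m) F) (t : ℕ) :
    Nat.card {p : GL (Fin n) F × {W : Matrix (Fin n) (Fin m) F // W.rank = t} //
        (p.1 : Matrix (Fin n) (Fin n) F) * (X + (p.2 : Matrix (Fin n) (Fin m) F)) = Y} ≤
      Nat.card {A : GL (Fin n) F // (A.1 * Y - X).rank = t} := by
  have key (p : {p : GL (Fin n) F × {W : Matrix (Fin n) (Fin m) F // W.rank = t} //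
        (p.1 : Matrix (Fin n) (Fin n) F) * (X + (p.2 : Matrix (Fin n) (Fin m) F)) = Y}) :
      (p.1.1⁻¹).1 * Y - X = p.1.2.1 := by
    have h := congrArg (p.1.1⁻¹.1 * ·) p.2
    simp only [← Matrix.mul_assoc, Units.inv_mul, Matrix.one_mul] at h
    rw [← h, add_sub_cancel_left]
  refine Nat.card_le_card_of_injective
    (fun p => ⟨p.1.1⁻¹, by rw [key p]; exact p.1.2.2⟩) fun p p' h => ?_
  have h1 : p.1.1⁻¹ = p'.1.1⁻¹ := congrArg Subtype.val h
  refine Subtype.ext (Prod.ext (inv_injective h1) (Subtype.ext ?_))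
  rw [← key p, ← key p', h1]

end Matrices

section Channel

open Module Matrix

variable {F : Type} [Field F] [Fintype F] {n m : ℕ}

lemma card_rank_pos {t : ℕ} (hn : t ≤ n) (hm : t ≤ m) :
    0 < (Nat.card {W : Matrix (Fin n) (Fin m) F // W.rank = t} : ℝ) := by
  have hq : (2 : ℝ) ≤ Fintype.card F := by exact_mod_cast Fintype.one_lt_card
  have h := spanCount_bot_mul (F := F) (V := Fin n → F) m t (n := n) (by simp)
  rw [← card_rank_eq] at h
  refine pos_of_mul_pos_left ?_ (indepProd_pos hq (le_refl t)).le
  rw [h]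
  exact mul_pos (indepProd_pos hq hm) (indepProd_pos hq hn)

lemma ammcKernel_nonneg (t : ℕ) (X Y : Matrix (Fin n) (Fin m) F) : 0 ≤ ammcKernel F n m t X Y := by
  unfold ammcKernel; positivity

lemma sum_ammcKernel {t : ℕ} [Fintype (Matrix (Fin n) (Fin m) F)] (hn : t ≤ n) (hm : t ≤ m)
    (X : Matrix (Fin n) (Fin m) F) : ∑ Y, ammcKernel F n m t X Y = 1 := by
  have hT := card_rank_pos (F := F) hn hm
  have hG : (0 : ℝ) < Nat.card (GL (Fin n) F) := by exact_mod_cast Nat.card_pos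
  simp only [ammcKernel]
  rw [← Finset.sum_div, div_eq_one_iff_eq (mul_pos hG hT).ne', ← Nat.cast_sum, ← Nat.cast_mul,
    ← Nat.card_sigma, ← Nat.card_prod]
  exact congrArg _ (Nat.card_congr (Equiv.sigmaFiberEquiv _))

lemma ammcKernel_le {t : ℕ} (hnm : 2 * n ≤ m) (ht : t ≤ n) (X Y : Matrix (Fin n) (Fin m) F) :
    ammcKernel F n m t X Y ≤ 4 * (1 + (t : ℝ)) * (Fintype.card F : ℝ) ^ ((m - n) * (n - t)) /
      Nat.card {W : Matrix (Fin n) (Fin m) F // W.rank = Y.rank} := by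
  have hq : (2 : ℝ) ≤ Fintype.card F := by exact_mod_cast Fintype.one_lt_card
  have hu : Y.rank ≤ n := Y.rank_le_height
  have hR := card_rank_pos (F := F) hu (show Y.rank ≤ m by omega)
  have hT := card_rank_pos (F := F) ht (show t ≤ m by omega)
  have hG : (0 : ℝ) < Nat.card (GL (Fin n) F) := by exact_mod_cast Nat.card_pos
  have hI := indepProd_pos hq hu
  have hV : finrank F (Fin n → F) = n := by simp
  obtain ⟨W, hW⟩ := exists_card_rank_sub_mul_le X Y t
  have hpairs := (Nat.cast_le (α := ℝ)).2 (card_ammc_pairs_le X Y t)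
  have hmain : (Nat.card {W : Matrix (Fin n) (Fin m) F // W.rank = Y.rank} : ℝ) *
      spanCount W Y.rank t ≤ 4 * (1 + (t : ℝ)) * (Fintype.card F : ℝ) ^ ((m - n) * (n - t)) *
        (indepProd (Fintype.card F) n Y.rank *
          Nat.card {W : Matrix (Fin n) (Fin m) F // W.rank = t}) := by
    rcases lt_or_ge t (finrank F W) with h | h
    · rw [spanCount_eq_zero h, Nat.cast_zero, mul_zero]
      positivity
    · obtain ⟨s, rfl⟩ := Nat.exists_eq_add_of_le' h
      refine count_mul_count_le hq hnm ht hu ?_ ?_ ?_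
      · rw [card_rank_eq]; exact spanCount_bot_mul m _ hV
      · rw [card_rank_eq]; exact spanCount_bot_mul m _ hV
      · rw [add_comm s]; exact spanCount_mul Y.rank s W rfl hV
  rw [ammcKernel, div_le_div_iff₀ (mul_pos hG hT) hR]
  refine le_of_mul_le_mul_right ?_ hI
  set R : ℝ := (Nat.card {W : Matrix (Fin n) (Fin m) F // W.rank = Y.rank} : ℝ)
  set T : ℝ := (Nat.card {W : Matrix (Fin n) (Fin m) F // W.rank = t} : ℝ)
  set I := indepProd (Fintype.card F) n Y.rank
  set G : ℝ := (Nat.card (GL (Fin n) F) : ℝ)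
  calc _ ≤ (Nat.card {A : GL (Fin n) F // (A.1 * Y - X).rank = t} : ℝ) * R * I := by gcongr
    _ = (Nat.card {A : GL (Fin n) F // (A.1 * Y - X).rank = t} : ℝ) * I * R := by ring
    _ ≤ spanCount W Y.rank t * G * R := by gcongr
    _ = R * spanCount W Y.rank t * G := by ring
    _ ≤ _ := mul_le_mul_of_nonneg_right hmain hG.le
    _ = _ := by ring

lemma sum_inv_card_rank [Fintype (Matrix (Fin n) (Fin m) F)] (hnm : n ≤ m) :
    ∑ Y : Matrix (Fin n) (Fin m) F,
      (Nat.card {W : Matrix (Fin n) (Fin m) F // W.rank = Y.rank} : ℝ)⁻¹ = n + 1 := by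
  classical
  rw [← Finset.sum_fiberwise_of_maps_to (t := Finset.range (n + 1)) (g := Matrix.rank)
    fun Y _ => Finset.mem_range.2 (Nat.lt_succ_of_le Y.rank_le_height)]
  rw [Finset.sum_congr rfl (g := fun _ => (1 : ℝ)) fun u hu => ?_]
  · simp
  have hu : u ≤ n := Nat.lt_succ_iff.1 (Finset.mem_range.1 hu)
  have hpos := card_rank_pos (F := F) hu (hu.trans hnm)
  rw [Finset.sum_congr rfl
    (g := fun _ => (Nat.card {W : Matrix (Fin n) (Fin m) F // W.rank = u} : ℝ)⁻¹)
    fun Y hY => by rw [(Finset.mem_filter.1 hY).2]]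
  rw [Finset.sum_const, ← Fintype.card_subtype, ← Nat.card_eq_fintype_card, nsmul_eq_mul,
    mul_inv_cancel₀ hpos.ne']

end Channel

/-- for `n ≤ m/2` (and `t ≤ n`), the capacity (in `q`-ary units) of the
additive-multiplicative matrix channel satisfies
`C ≤ (m-n)(n-t) + log_q 4(1+n)(1+t)`. -/
theorem stmt_16 (F : Type) [Field F] [Fintype F] (n m t : ℕ)
    (hnm : 2 * n ≤ m) (ht : t ≤ n) :
    capacityB (Fintype.card F) (ammcKernel F n m t)
      ≤ ((m : ℝ) - n) * ((n : ℝ) - t) +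
          Real.logb (Fintype.card F) (4 * (1 + (n : ℝ)) * (1 + (t : ℝ))) := by
  have hq : (1 : ℝ) < Fintype.card F := by exact_mod_cast Fintype.one_lt_card
  set q : ℝ := (Fintype.card F : ℝ) with hqdef
  have hq0 : 0 < q := by linarith
  have hlog : ((m : ℝ) - n) * ((n : ℝ) - t) +
      Real.logb q (4 * (1 + (n : ℝ)) * (1 + (t : ℝ))) =
        Real.logb q (4 * (1 + (n : ℝ)) * (1 + (t : ℝ)) * q ^ ((m - n) * (n - t))) := by
    rw [Real.logb_mul (x := _ * (1 + (t : ℝ))) (y := q ^ _) (by positivity) (by positivity),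
      Real.logb_pow, Real.logb_self_eq_one hq,
      mul_one, Nat.cast_mul, Nat.cast_sub (by omega), Nat.cast_sub ht, add_comm]
  rw [hlog]
  refine Real.sSup_le ?_ (Real.logb_nonneg hq ?_)
  · rintro c ⟨p, hp, hp1, rfl⟩
    refine mutualInfoB_le_logb hq hp hp1 (ammcKernel_nonneg t) (sum_ammcKernel ht (by omega))
      (fun Y => by positivity) (ammcKernel_le hnm ht) (by positivity) (le_of_eq ?_)
    simp_rw [div_eq_mul_inv]
    rw [← Finset.mul_sum, sum_inv_card_rank (by omega), ← hqdef]
    ring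
  · have h1 : (1 : ℝ) ≤ q ^ ((m - n) * (n - t)) := one_le_pow₀ hq.le
    have h2 : (1 : ℝ) ≤ 1 + (n : ℝ) := by linarith [Nat.cast_nonneg (α := ℝ) n]
    have h3 : (1 : ℝ) ≤ 1 + (t : ℝ) := by linarith [Nat.cast_nonneg (α := ℝ) t]
    exact one_le_mul_of_one_le_of_one_le (one_le_mul_of_one_le_of_one_le
      (one_le_mul_of_one_le_of_one_le (by norm_num) h2) h3) h1
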